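/- Let 0<α<1 and T>0. Suppose f:[0,T]→ℝ is continuous on [0,T], continuously differentiable on (0,T] with f' integrable on (0,T), and f attains its maximum over [0,T] at a point t₀ ∈ (0,T]. Then the Caputo fractional derivative of f at t₀ is nonnegative: (D^α f)(t₀) ≥ 0. -/

import Mathlib

/-!
Put `k s = (t₀ - s) ^ (-α)`, a nonnegative increasing kernel. On `[0, b]` with `b < t₀`, integration
by parts against `f - f t₀ ≤ 0` gives `∫₀ᵇ k f' ≥ -k b (f t₀ - f b) = -k b ∫_b^{t₀} f'`. Since
`k b ≤ k` on `[b, t₀)`, this error is at most `∫_b^{t₀} |k f'|`, which tends to `0` as `b → t₀`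
because `k f'` is integrable; it is integrable because `f'` is continuous up to `t₀` and `α < 1`.
-/

open MeasureTheory Set Filter

/-- The Caputo fractional derivative of order `α` of `f` at `t`:
`(D^α f)(t) = (1/Γ(1−α)) ∫₀ᵗ (t−s)^{−α} f'(s) ds`. -/
noncomputable def caputo (α : ℝ) (f : ℝ → ℝ) (t : ℝ) : ℝ :=
  (1 / Real.Gamma (1 - α)) * ∫ s in (0:ℝ)..t, (t - s) ^ (-α) * deriv f s

open scoped Topology

section MonotoneKernel

variable {a b c M : ℝ} {k f : ℝ → ℝ}

theorem mul_sub_le_integral_mul_deriv_of_monotoneOn (hab : a ≤ b)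
    (hkc : ContinuousOn k (Icc a b)) (hkd : DifferentiableOn ℝ k (Ioo a b))
    (hkm : MonotoneOn k (Icc a b)) (hk₀ : 0 ≤ k a)
    (hfc : ContinuousOn f (Icc a b)) (hfd : DifferentiableOn ℝ f (Ioo a b))
    (hf' : IntervalIntegrable (deriv f) volume a b) (hfM : ∀ s ∈ Icc a b, f s ≤ M) :
    k b * (f b - M) ≤ ∫ s in a..b, k s * deriv f s := by
  rw [← uIcc_of_le hab] at hkc hkm hfc
  have by_parts := intervalIntegral.integral_mul_deriv_eq_deriv_mul_of_hasDerivAt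
    (v := fun s => f s - M) hkc (hfc.sub continuousOn_const)
    (fun s hs => by
      rw [min_eq_left hab, max_eq_right hab] at hs
      exact (hkd.differentiableAt (Ioo_mem_nhds hs.1 hs.2)).hasDerivAt)
    (fun s hs => by
      rw [min_eq_left hab, max_eq_right hab] at hs
      exact (hfd.differentiableAt (Ioo_mem_nhds hs.1 hs.2)).hasDerivAt.sub_const M)
    hkm.intervalIntegrable_deriv hf'
  have boundary_nonpos : k a * (f a - M) ≤ 0 :=
    mul_nonpos_of_nonneg_of_nonpos hk₀ (sub_nonpos.2 (hfM a (left_mem_Icc.2 hab)))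
  have deriv_nonneg : ∀ s ∈ Ioo a b, 0 ≤ deriv k s := fun s hs => by
    rw [← derivWithin_of_mem_nhds (uIcc_of_le hab ▸ Icc_mem_nhds hs.1 hs.2)]
    exact hkm.derivWithin_nonneg
  have integral_nonpos : ∫ s in a..b, deriv k s * (f s - M) ≤ 0 := by
    rw [intervalIntegral.integral_of_le hab, integral_Ioc_eq_integral_Ioo]
    exact setIntegral_nonpos measurableSet_Ioo fun s hs =>
      mul_nonpos_of_nonneg_of_nonpos (deriv_nonneg s hs)
        (sub_nonpos.2 (hfM s (Ioo_subset_Icc_self hs)))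
  linarith

theorem tendsto_smul_integral_nhdsLT_of_monotoneOn {E : Type*} [NormedAddCommGroup E]
    [NormedSpace ℝ E] {g : ℝ → E} (hac : a < c) (hkm : MonotoneOn k (Ico a c)) (hk₀ : 0 ≤ k a)
    (hkg : IntervalIntegrable (fun s => k s • g s) volume a c) :
    Tendsto (fun b => k b • ∫ s in b..c, g s) (𝓝[<] c) (𝓝 0) := by
  have tail_tendsto : Tendsto (fun b => ∫ s in b..c, ‖k s • g s‖) (𝓝[<] c) (𝓝 0) := by
    have h := intervalIntegral.continuousOn_primitive_interval_left
      ((intervalIntegrable_iff' enorm_ne_top).1 hkg.norm) c right_mem_uIcc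
    rw [ContinuousWithinAt, intervalIntegral.integral_same, uIcc_of_le hac.le] at h
    exact h.mono_left (nhdsWithin_le_of_mem (Icc_mem_nhdsLT hac))
  refine squeeze_zero_norm' ?_ tail_tendsto
  filter_upwards [Ico_mem_nhdsLT hac] with b hb
  rw [← intervalIntegral.integral_smul]
  refine intervalIntegral.norm_integral_le_of_norm_le hb.2.le ?_
    (hkg.norm.mono_set (uIcc_subset_uIcc_right (mem_uIcc_of_le hb.1 hb.2.le)))
  filter_upwards [Measure.ae_ne volume c] with s hsc hs
  have hs' : s ∈ Ico a c := ⟨hb.1.trans hs.1.le, hs.2.lt_of_ne hsc⟩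
  have hkb : 0 ≤ k b := hk₀.trans (hkm (left_mem_Ico.2 hac) hb hb.1)
  have hkbs : k b ≤ k s := hkm hb hs' hs.1.le
  rw [norm_smul, norm_smul, Real.norm_of_nonneg hkb, Real.norm_of_nonneg (hkb.trans hkbs)]
  gcongr

theorem integral_mul_deriv_nonneg_of_isMaxOn (hac : a < c)
    (hkc : ContinuousOn k (Ico a c)) (hkd : DifferentiableOn ℝ k (Ioo a c))
    (hkm : MonotoneOn k (Ico a c)) (hk₀ : 0 ≤ k a)
    (hfc : ContinuousOn f (Icc a c)) (hfd : DifferentiableOn ℝ f (Ioo a c))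
    (hf' : IntervalIntegrable (deriv f) volume a c)
    (hkf' : IntervalIntegrable (fun s => k s * deriv f s) volume a c)
    (hmax : IsMaxOn f (Icc a c) c) :
    0 ≤ ∫ s in a..c, k s * deriv f s := by
  have primitive_tendsto : Tendsto (fun b => ∫ s in a..b, k s * deriv f s) (𝓝[<] c)
      (𝓝 (∫ s in a..c, k s * deriv f s)) := by
    have h := intervalIntegral.continuousOn_primitive_interval' hkf' left_mem_uIcc c
      right_mem_uIcc
    rw [uIcc_of_le hac.le] at h
    exact h.mono_left (nhdsWithin_le_of_mem (Icc_mem_nhdsLT hac))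
  have error_tendsto : Tendsto (fun b => -(k b * ∫ s in b..c, deriv f s)) (𝓝[<] c) (𝓝 0) := by
    simpa only [smul_eq_mul, neg_zero] using
      (tendsto_smul_integral_nhdsLT_of_monotoneOn hac hkm hk₀ hkf').neg
  refine le_of_tendsto_of_tendsto error_tendsto primitive_tendsto ?_
  filter_upwards [Ico_mem_nhdsLT hac] with b hb
  have hIcc : Icc a b ⊆ Ico a c := Icc_subset_Ico_right hb.2
  have hIoo : Ioo a b ⊆ Ioo a c := Ioo_subset_Ioo_right hb.2.le
  have hb' : b ∈ uIcc a c := mem_uIcc_of_le hb.1 hb.2.le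
  have increment : ∫ s in b..c, deriv f s = f c - f b :=
    intervalIntegral.integral_eq_sub_of_hasDerivAt_of_le hb.2.le
      (hfc.mono (Icc_subset_Icc_left hb.1))
      (fun s hs => (hfd.differentiableAt
        (Ioo_mem_nhds (hb.1.trans_lt hs.1) hs.2)).hasDerivAt)
      (hf'.mono_set (uIcc_subset_uIcc_right hb'))
  calc -(k b * ∫ s in b..c, deriv f s) = k b * (f b - f c) := by rw [increment]; ring
    _ ≤ ∫ s in a..b, k s * deriv f s :=
      mul_sub_le_integral_mul_deriv_of_monotoneOn hb.1 (hkc.mono hIcc) (hkd.mono hIoo)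
        (hkm.mono hIcc) hk₀ (hfc.mono (hIcc.trans Ico_subset_Icc_self)) (hfd.mono hIoo)
        (hf'.mono_set (uIcc_subset_uIcc_left hb'))
        (fun s hs => hmax (Ico_subset_Icc_self (hIcc hs)))

end MonotoneKernel

section PowerKernel

variable {a c r : ℝ} {f g : ℝ → ℝ}

theorem differentiableOn_sub_rpow (c r : ℝ) :
    DifferentiableOn ℝ (fun s => (c - s) ^ r) (Iio c) := fun _ hs =>
  ((differentiableAt_id.const_sub c).rpow_const
    (Or.inl (sub_pos.2 hs).ne')).differentiableWithinAt

theorem monotoneOn_sub_rpow_of_nonpos (c : ℝ) (hr : r ≤ 0) :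
    MonotoneOn (fun s => (c - s) ^ r) (Iio c) := fun _ _ _ ht hst =>
  Real.rpow_le_rpow_of_nonpos (sub_pos.2 ht) (sub_le_sub_left hst c) hr

theorem intervalIntegrable_of_sub_rpow_mul (hac : a ≤ c) (hr : r ≤ 0)
    (hg : IntervalIntegrable (fun s => (c - s) ^ r * g s) volume a c) :
    IntervalIntegrable g volume a c := by
  have inv_continuous : Continuous fun s => (c - s) ^ (-r) :=
    (continuous_const.sub continuous_id).rpow_const fun _ => Or.inr (neg_nonneg.2 hr)
  refine (hg.continuousOn_mul inv_continuous.continuousOn).congr_uIoo fun s hs => ?_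
  rw [uIoo_of_le hac] at hs
  have hcs : 0 < c - s := sub_pos.2 hs.2
  simp only [← mul_assoc, ← Real.rpow_add hcs, neg_add_cancel, Real.rpow_zero, one_mul]

theorem intervalIntegrable_sub_rpow_mul (hac : a < c) (hr : -1 < r)
    (hg : IntervalIntegrable g volume a c) (hgc : ContinuousOn g (Ioc a c)) :
    IntervalIntegrable (fun s => (c - s) ^ r * g s) volume a c := by
  obtain ⟨m, ham, hmc⟩ := exists_between hac
  have left_part : IntervalIntegrable (fun s => (c - s) ^ r * g s) volume a m := by
    refine (hg.mono_set (uIcc_subset_uIcc_left (mem_uIcc_of_le ham.le hmc.le))).continuousOn_mul ?_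
    rw [uIcc_of_le ham.le]
    exact (differentiableOn_sub_rpow c r).continuousOn.mono fun s hs => hs.2.trans_lt hmc
  have right_part : IntervalIntegrable (fun s => (c - s) ^ r * g s) volume m c := by
    have kernel_integrable : IntervalIntegrable (fun s => (c - s) ^ r) volume m c := by
      simpa only [sub_sub_cancel] using
        (intervalIntegral.intervalIntegrable_rpow' hr (a := c - m) (b := c - c)).comp_sub_left c
    refine kernel_integrable.mul_continuousOn ?_
    rw [uIcc_of_le hmc.le]
    exact hgc.mono fun s hs => ⟨ham.trans_le hs.1, hs.2⟩
  exact left_part.trans right_part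

theorem intervalIntegrable_sub_rpow_mul_deriv (hac : a < c) (hr : -1 < r)
    (hf : ContDiffOn ℝ 1 f (Ioc a c)) (hf' : IntervalIntegrable (deriv f) volume a c) :
    IntervalIntegrable (fun s => (c - s) ^ r * deriv f s) volume a c := by
  -- `deriv f c` is a junk value when `f` is only left-differentiable at `c`; `derivWithin` is
  -- continuous up to `c` and agrees with `deriv` on the open interval.
  have deriv_eq : EqOn (deriv f) (derivWithin f (Ioc a c)) (uIoo a c) := fun s hs => by
    rw [uIoo_of_le hac.le] at hs
    exact (derivWithin_of_mem_nhds (Ioc_mem_nhds hs.1 hs.2)).symm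
  refine (intervalIntegrable_sub_rpow_mul hac hr (hf'.congr_uIoo deriv_eq)
    (hf.continuousOn_derivWithin (uniqueDiffOn_Ioc a c) le_rfl)).congr_uIoo fun s hs => ?_
  simp only [deriv_eq hs]

end PowerKernel

theorem caputo_nonneg_at_max_general {α t₀ : ℝ} {f : ℝ → ℝ} (hα : 0 ≤ α) (hα₁ : α < 1)
    (ht₀ : 0 < t₀) (hfc : ContinuousOn f (Icc 0 t₀)) (hfd : DifferentiableOn ℝ f (Ioo 0 t₀))
    (hint : IntervalIntegrable (fun s => (t₀ - s) ^ (-α) * deriv f s) volume 0 t₀)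
    (hmax : IsMaxOn f (Icc 0 t₀) t₀) :
    0 ≤ caputo α f t₀ := by
  have hr : -α ≤ 0 := neg_nonpos.2 hα
  have kernel_diff := differentiableOn_sub_rpow t₀ (-α)
  refine mul_nonneg (one_div_nonneg.2 (Real.Gamma_pos_of_pos (sub_pos.2 hα₁)).le) ?_
  exact integral_mul_deriv_nonneg_of_isMaxOn ht₀
    (kernel_diff.continuousOn.mono Ico_subset_Iio_self) (kernel_diff.mono Ioo_subset_Iio_self)
    ((monotoneOn_sub_rpow_of_nonpos t₀ hr).mono Ico_subset_Iio_self)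
    (Real.rpow_nonneg (sub_nonneg.2 ht₀.le) _)
    hfc hfd (intervalIntegrable_of_sub_rpow_mul ht₀.le hr hint) hint hmax

/-- if `f` is continuous on `[0,T]`, continuously differentiable on `(0,T]`
with integrable derivative, and attains its maximum over `[0,T]` at `t₀ ∈ (0,T]`,
then the Caputo derivative of order `α ∈ (0,1)` of `f` at `t₀` is nonnegative. -/
theorem caputo_nonneg_at_max (α T : ℝ) (hα : 0 < α) (hα1 : α < 1) (hT : 0 < T)
    (f : ℝ → ℝ) (hf : ContinuousOn f (Set.Icc 0 T))
    (hf1 : ContDiffOn ℝ 1 f (Set.Ioc 0 T))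
    (hfint : IntervalIntegrable (deriv f) MeasureTheory.volume 0 T)
    (t₀ : ℝ) (ht₀ : t₀ ∈ Set.Ioc 0 T)
    (hmax : ∀ t ∈ Set.Icc 0 T, f t ≤ f t₀) :
    0 ≤ caputo α f t₀ := by
  obtain ⟨h₀, hT₀⟩ := ht₀
  have hf1' : ContDiffOn ℝ 1 f (Ioc 0 t₀) := hf1.mono (Ioc_subset_Ioc_right hT₀)
  have hfint' : IntervalIntegrable (deriv f) volume 0 t₀ :=
    hfint.mono_set (uIcc_subset_uIcc_left (mem_uIcc_of_le h₀.le hT₀))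
  exact caputo_nonneg_at_max_general hα.le hα1 h₀ (hf.mono (Icc_subset_Icc_right hT₀))
    ((hf1'.differentiableOn one_ne_zero).mono Ioo_subset_Ioc_self)
    (intervalIntegrable_sub_rpow_mul_deriv h₀ (neg_lt_neg hα1) hf1' hfint')
    fun t ht => hmax t (Icc_subset_Icc_right hT₀ ht)
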